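/- Let n ≥ 1, μ, ν ∈ ℝ, 1 ≤ p, q ≤ ∞ and 0 < r, r₀ ≤ ∞. Assume μ ≥ ν, 0 ≤ ν/n + 1/q ≤ μ/n + 1/p ≤ 1, with r₀ = ∞ if μ/n + 1/p = 0 and r = ∞ if ν/n + 1/q = 0. Assume in addition that one of the following holds: (1) μ > ν, p, q < ∞, r₀ = ∞ and ν/n + 1/q < μ/n + 1/p < 1; (2) p, q < ∞, r₀ ≤ r and μ/n + 1/p < 1; (3) r₀ ≤ min(1, r). Then there exists a constant C, independent of t and f, such that for every t > 0 and every measurable f on ℝⁿ, ‖e^{tΔ}f‖_{K̇^ν_{q,r}} ≤ C·t^{−(n/2)[(μ/n + 1/p) − (ν/n + 1/q)]}·‖f‖_{K̇^μ_{p,r₀}}. -/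

import Mathlib

open MeasureTheory Set ENNReal Filter

noncomputable section

abbrev Euc (n : ℕ) : Type := EuclideanSpace ℝ (Fin n)

def annulus (n : ℕ) (j : ℤ) : Set (Euc n) :=
  {x : Euc n | (2 : ℝ) ^ (j - 1) ≤ ‖x‖ ∧ ‖x‖ < (2 : ℝ) ^ j}

def herzNorm (n : ℕ) (s : ℝ) (q r : ℝ≥0∞) (f : Euc n → ℝ) : ℝ≥0∞ :=
  if r = ⊤ then
    ⨆ j : ℤ, ENNReal.ofReal ((2 : ℝ) ^ ((j : ℝ) * s)) *
      eLpNorm ((annulus n j).indicator f) q volume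
  else
    (∑' j : ℤ, (ENNReal.ofReal ((2 : ℝ) ^ ((j : ℝ) * s)) *
      eLpNorm ((annulus n j).indicator f) q volume) ^ r.toReal) ^ (1 / r.toReal)

def heatKernel (n : ℕ) (t : ℝ) (x y : Euc n) : ℝ :=
  (4 * Real.pi * t) ^ (-(n : ℝ) / 2) * Real.exp (-‖x - y‖ ^ 2 / (4 * t))

def heatSemigroup (n : ℕ) (t : ℝ) (f : Euc n → ℝ) (x : Euc n) : ℝ :=
  ∫ y, heatKernel n t x y * f y

/-!
By the scaling `e^{tΔ} f (c x) = e^{(t/c²)Δ} (f (c ·)) (x)` with `c` a power of two, under which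
the Herz norm with parameters `(s, p)` is homogeneous of degree `-(s + n / p)`, it suffices to bound
`e^{tΔ}` uniformly for `1 ≤ t ≤ 4`.

At these times the kernel is at most `1` and has integral `1` in either variable, so it contracts
`L^p` into `L^s` whenever `p ≤ s`. For `x` in `A_j` with `j > 0`, the part of `f` living on `A_j`
and its two neighbours is therefore estimated annulus by annulus, with `s = max p q` and Hölder's
inequality on `A_j`; this gives a gain `2^{-δj}`, where `δ = μ - ν` if `p ≤ q` and
`δ = (μ + n / p) - (ν + n / q)` otherwise. If `δ > 0` the gain is summable and no relation between
`r₀` and `r` is needed; if `δ = 0` the inclusion `ℓ^{r₀} ⊆ ℓ^r` takes its place.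

All other pairs satisfy `|x| + |y| ≤ 3 (1 + |x - y|)`, so there the Gaussian kernel is dominated by
the rank one kernel `C (1 + |x|)^{-L} (1 + |y|)^{-L}`. Near the origin, `(1 + |x|)^{-L}` has
finite `K̇^ν_{q,r}` norm because `0 ≤ ν / n + 1 / q`, and it is integrable against `K̇^μ_{p,r₀}`
because `μ / n + 1 / p ≤ 1`; at infinity both hold once `L` is large.
-/

/-! ### Sequence spaces -/

theorem eLpNorm_le_of_eLpNorm_le_of_eLpNorm_top_le {α ε : Type*} [MeasurableSpace α]
    {m : Measure α} [TopologicalSpace ε] [ContinuousENorm ε] {f : α → ε} {p q M : ℝ≥0∞}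
    (hp : p ≠ 0) (hpq : p ≤ q) (hfp : eLpNorm f p m ≤ M) (hf_top : eLpNorm f ⊤ m ≤ M) :
    eLpNorm f q m ≤ M := by
  rcases eq_or_ne q ⊤ with rfl | hq_top
  · exact hf_top
  rcases eq_or_ne M ⊤ with rfl | hM
  · exact le_top
  have hp_top : p ≠ ⊤ := ne_top_of_le_ne_top hq_top hpq
  have hq : q ≠ 0 := (hp.bot_lt.trans_le hpq).ne'
  have hp_pos : 0 < p.toReal := ENNReal.toReal_pos hp hp_top
  have hq_pos : 0 < q.toReal := ENNReal.toReal_pos hq hq_top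
  have hd : 0 ≤ q.toReal - p.toReal := sub_nonneg.2 (ENNReal.toReal_mono hq_top hpq)
  have hsplit (x : ℝ≥0∞) : x ^ q.toReal = x ^ p.toReal * x ^ (q.toReal - p.toReal) := by
    rw [← ENNReal.rpow_add_of_nonneg _ _ hp_pos.le hd, add_sub_cancel]
  have hfp' : ∫⁻ x, ‖f x‖ₑ ^ p.toReal ∂m ≤ M ^ p.toReal := by
    rwa [eLpNorm_eq_lintegral_rpow_enorm_toReal hp hp_top, one_div,
      ENNReal.rpow_inv_le_iff hp_pos] at hfp
  rw [eLpNorm_eq_lintegral_rpow_enorm_toReal hq hq_top, one_div, ENNReal.rpow_inv_le_iff hq_pos]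
  calc ∫⁻ x, ‖f x‖ₑ ^ q.toReal ∂m
      ≤ ∫⁻ x, ‖f x‖ₑ ^ p.toReal * M ^ (q.toReal - p.toReal) ∂m := by
        refine lintegral_mono_ae ?_
        filter_upwards [enorm_ae_le_eLpNormEssSup f m] with x hx
        rw [hsplit]
        gcongr
        exact hx.trans (eLpNorm_exponent_top.symm.trans_le hf_top)
    _ = (∫⁻ x, ‖f x‖ₑ ^ p.toReal ∂m) * M ^ (q.toReal - p.toReal) :=
        lintegral_mul_const' _ _ (ENNReal.rpow_ne_top_of_nonneg hd hM)
    _ ≤ M ^ p.toReal * M ^ (q.toReal - p.toReal) := by gcongr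
    _ = M ^ q.toReal := (hsplit M).symm

theorem eLpNorm_count_anti {ι ε : Type*} [MeasurableSpace ι] [MeasurableSingletonClass ι]
    [TopologicalSpace ε] [ContinuousENorm ε] (a : ι → ε) {r r₀ : ℝ≥0∞} (hr₀ : r₀ ≠ 0)
    (h : r₀ ≤ r) : eLpNorm a r .count ≤ eLpNorm a r₀ .count := by
  refine eLpNorm_le_of_eLpNorm_le_of_eLpNorm_top_le hr₀ h le_rfl ?_
  rw [eLpNorm_exponent_top, eLpNormEssSup_count]
  exact iSup_le fun i ↦ enorm_le_eLpNorm_count a i hr₀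

theorem eLpNorm_count_comp_add_right (a : ℤ → ℝ≥0∞) (r : ℝ≥0∞) (d : ℤ) :
    eLpNorm (fun j ↦ a (j + d)) r .count = eLpNorm a r .count :=
  eLpNorm_comp_measurePreserving Measurable.of_discrete.aestronglyMeasurable
    (measurePreserving_add_right .count d)

theorem eLpNorm_const_mul_le {α : Type*} [MeasurableSpace α] {m : Measure α} {a : α → ℝ≥0∞}
    (ha : Measurable a) (c r : ℝ≥0∞) : eLpNorm (fun x ↦ c * a x) r m ≤ c * eLpNorm a r m :=
  eLpNorm_le_mul_eLpNorm_of_ae_le_mul'' r ha.aestronglyMeasurable (ae_of_all _ fun _ ↦ le_rfl)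

theorem tsum_two_rpow_neg_mul_abs_lt_top {c : ℝ} (hc : 0 < c) :
    ∑' k : ℤ, (2 : ℝ≥0∞) ^ (-(c * |(k : ℝ)|)) < ⊤ := by
  have hnat : ∑' k : ℕ, (2 : ℝ≥0∞) ^ (-(c * k)) < ⊤ := by
    simp_rw [← neg_mul, ENNReal.rpow_mul, ENNReal.rpow_natCast, ENNReal.tsum_geometric]
    have : (2 : ℝ≥0∞) ^ (-c) < 1 :=
      ENNReal.rpow_lt_one_of_one_lt_of_neg ENNReal.one_lt_two (neg_lt_zero.2 hc)
    exact ENNReal.inv_lt_top.2 (tsub_pos_of_lt this)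
  rw [tsum_of_nat_of_neg_add_one ENNReal.summable ENNReal.summable]
  refine ENNReal.add_lt_top.2 ⟨by simpa using hnat, ?_⟩
  refine (ENNReal.tsum_le_tsum fun k ↦ ?_).trans_lt hnat
  refine ENNReal.rpow_le_rpow_of_exponent_le one_le_two (neg_le_neg ?_)
  push_cast
  rw [abs_neg, abs_of_nonneg (by positivity)]
  gcongr
  exact le_add_of_nonneg_right zero_le_one

theorem eLpNorm_two_rpow_neg_mul_abs_lt_top {c : ℝ} (hc : 0 < c) {r : ℝ≥0∞} (hr : r ≠ 0) :
    eLpNorm (fun k : ℤ ↦ (2 : ℝ≥0∞) ^ (-(c * |(k : ℝ)|))) r .count < ⊤ := by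
  rcases eq_or_ne r ⊤ with rfl | hr_top
  · refine (eLpNorm_count_anti _ one_ne_zero le_top).trans_lt ?_
    simpa [eLpNorm_one_eq_lintegral_enorm, lintegral_count]
      using tsum_two_rpow_neg_mul_abs_lt_top hc
  · rw [eLpNorm_lt_top_iff_lintegral_rpow_enorm_lt_top hr hr_top, lintegral_count]
    have hr_pos : 0 < r.toReal := ENNReal.toReal_pos hr hr_top
    convert tsum_two_rpow_neg_mul_abs_lt_top (mul_pos hc hr_pos) using 3 with k
    rw [enorm_eq_self, ← ENNReal.rpow_mul]
    ring_nf

theorem exists_eLpNorm_two_rpow_neg_mul_abs_mul_le {c : ℝ} (hc : 0 ≤ c) {r r₀ : ℝ≥0∞}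
    (hr : r ≠ 0) (hr₀ : r₀ ≠ 0) (h : 0 < c ∨ r₀ ≤ r) :
    ∃ K : ℝ≥0∞, K ≠ ⊤ ∧ ∀ a : ℤ → ℝ≥0∞,
      eLpNorm (fun k : ℤ ↦ (2 : ℝ≥0∞) ^ (-(c * |(k : ℝ)|)) * a k) r .count ≤
        K * eLpNorm a r₀ .count := by
  rcases h with hc_pos | hr₀r
  · refine ⟨_, (eLpNorm_two_rpow_neg_mul_abs_lt_top hc_pos hr).ne, fun a ↦ ?_⟩
    rw [mul_comm]
    refine le_trans (eLpNorm_mono_enorm fun k ↦ ?_)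
      (eLpNorm_const_mul_le .of_discrete (eLpNorm a r₀ .count) r)
    simp only [enorm_eq_self]
    rw [mul_comm]
    gcongr
    exact enorm_le_eLpNorm_count a k hr₀
  · refine ⟨1, ENNReal.one_ne_top, fun a ↦ ?_⟩
    rw [one_mul]
    refine (eLpNorm_mono_enorm fun k ↦ ?_).trans (eLpNorm_count_anti a hr₀ hr₀r)
    refine mul_le_of_le_one_left' ?_
    rw [← ENNReal.rpow_zero (x := 2)]
    exact ENNReal.rpow_le_rpow_of_exponent_le one_le_two (neg_nonpos.2 (by positivity))

/-! ### Doubly substochastic kernels -/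

section Kernel

variable {α β : Type*} [MeasurableSpace α] [MeasurableSpace β] {m : Measure α} {m' : Measure β}

theorem rpow_lintegral_mul_le_lintegral_mul_rpow {k g : β → ℝ≥0∞} (hk : Measurable k)
    (hg : Measurable g) (hk_one : ∫⁻ y, k y ∂m' ≤ 1) {p : ℝ} (hp : 1 ≤ p) :
    (∫⁻ y, k y * g y ∂m') ^ p ≤ ∫⁻ y, k y * g y ^ p ∂m' := by
  have hp_pos : 0 < p := one_pos.trans_le hp
  have hp' : (1 : ℝ≥0∞) ≤ ENNReal.ofReal p := by simpa using hp
  have hjensen := eLpNorm_le_eLpNorm_mul_rpow_measure_univ (μ := m'.withDensity k) hp'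
    hg.aestronglyMeasurable
  have huniv : m'.withDensity k univ ^ (1 / (1 : ℝ≥0∞).toReal - 1 / (ENNReal.ofReal p).toReal)
      ≤ 1 := by
    refine ENNReal.rpow_le_one (by simpa using hk_one) ?_
    rw [ENNReal.toReal_ofReal hp_pos.le, ENNReal.toReal_one, div_one, sub_nonneg]
    exact (div_le_one hp_pos).2 hp
  have hle := hjensen.trans (mul_le_of_le_one_right' huniv)
  rwa [eLpNorm_one_eq_lintegral_enorm, eLpNorm_eq_lintegral_rpow_enorm_toReal
    (by simpa using hp_pos) ENNReal.ofReal_ne_top, ENNReal.toReal_ofReal hp_pos.le, one_div,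
    ENNReal.le_rpow_inv_iff hp_pos,
    lintegral_withDensity_eq_lintegral_mul _ hk (by fun_prop),
    lintegral_withDensity_eq_lintegral_mul _ hk (by fun_prop)] at hle

theorem lintegral_mul_le_eLpNorm_top {k : β → ℝ≥0∞} (hk : Measurable k)
    (hk_one : ∫⁻ y, k y ∂m' ≤ 1) (g : β → ℝ≥0∞) :
    ∫⁻ y, k y * g y ∂m' ≤ eLpNorm g ⊤ m' := by
  calc ∫⁻ y, k y * g y ∂m' ≤ ∫⁻ y, k y * eLpNorm g ⊤ m' ∂m' := by
        rw [eLpNorm_exponent_top]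
        refine lintegral_mono_ae ?_
        filter_upwards [enorm_ae_le_eLpNormEssSup g m'] with y hy
        gcongr
        exact hy
    _ = (∫⁻ y, k y ∂m') * eLpNorm g ⊤ m' := lintegral_mul_const _ hk
    _ ≤ eLpNorm g ⊤ m' := mul_le_of_le_one_left' hk_one

theorem lintegral_mul_le_eLpNorm {k g : β → ℝ≥0∞} (hk : Measurable k)
    (hk_one : ∫⁻ y, k y ∂m' ≤ 1) (hk_le : ∀ y, k y ≤ 1) (hg : Measurable g) {p : ℝ≥0∞}
    (hp : 1 ≤ p) : ∫⁻ y, k y * g y ∂m' ≤ eLpNorm g p m' := by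
  rcases eq_or_ne p ⊤ with rfl | hp_top
  · exact lintegral_mul_le_eLpNorm_top hk hk_one g
  have hp_zero : p ≠ 0 := (one_pos.trans_le hp).ne'
  have hp_one : 1 ≤ p.toReal := by simpa using ENNReal.toReal_mono hp_top hp
  rw [eLpNorm_eq_lintegral_rpow_enorm_toReal hp_zero hp_top, one_div,
    ENNReal.le_rpow_inv_iff (one_pos.trans_le hp_one)]
  exact (rpow_lintegral_mul_le_lintegral_mul_rpow hk hg hk_one hp_one).trans
    (lintegral_mono fun y ↦ mul_le_of_le_one_left' (hk_le y))

variable {K : α → β → ℝ≥0∞} {g : β → ℝ≥0∞} {p q : ℝ≥0∞}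

theorem eLpNorm_lintegral_kernel_mul_le_self [SFinite m] [SFinite m']
    (hK : Measurable (Function.uncurry K))
    (hK_left : ∀ x, ∫⁻ y, K x y ∂m' ≤ 1) (hK_right : ∀ y, ∫⁻ x, K x y ∂m ≤ 1)
    (hg : Measurable g) (hp : 1 ≤ p) :
    eLpNorm (fun x ↦ ∫⁻ y, K x y * g y ∂m') p m ≤ eLpNorm g p m' := by
  rcases eq_or_ne p ⊤ with rfl | hp_top
  · rw [eLpNorm_exponent_top]
    exact eLpNormEssSup_le_of_ae_enorm_bound (ae_of_all _ fun x ↦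
      lintegral_mul_le_eLpNorm_top (by fun_prop) (hK_left x) g)
  have hp_zero : p ≠ 0 := (one_pos.trans_le hp).ne'
  simp_rw [eLpNorm_eq_lintegral_rpow_enorm_toReal hp_zero hp_top, enorm_eq_self]
  gcongr ?_ ^ _
  calc ∫⁻ x, (∫⁻ y, K x y * g y ∂m') ^ p.toReal ∂m
      ≤ ∫⁻ x, ∫⁻ y, K x y * g y ^ p.toReal ∂m' ∂m :=
        lintegral_mono fun x ↦ rpow_lintegral_mul_le_lintegral_mul_rpow (by fun_prop) hg
          (hK_left x) (by simpa using ENNReal.toReal_mono hp_top hp)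
    _ = ∫⁻ y, ∫⁻ x, K x y * g y ^ p.toReal ∂m ∂m' := lintegral_lintegral_swap (by fun_prop)
    _ = ∫⁻ y, (∫⁻ x, K x y ∂m) * g y ^ p.toReal ∂m' :=
        lintegral_congr fun y ↦ lintegral_mul_const _ (by fun_prop)
    _ ≤ ∫⁻ y, g y ^ p.toReal ∂m' := lintegral_mono fun y ↦ mul_le_of_le_one_left' (hK_right y)

theorem eLpNorm_lintegral_kernel_mul_le [SFinite m] [SFinite m']
    (hK : Measurable (Function.uncurry K))
    (hK_left : ∀ x, ∫⁻ y, K x y ∂m' ≤ 1) (hK_right : ∀ y, ∫⁻ x, K x y ∂m ≤ 1)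
    (hK_le : ∀ x y, K x y ≤ 1) (hg : Measurable g) (hp : 1 ≤ p) (hpq : p ≤ q) :
    eLpNorm (fun x ↦ ∫⁻ y, K x y * g y ∂m') q m ≤ eLpNorm g p m' := by
  refine eLpNorm_le_of_eLpNorm_le_of_eLpNorm_top_le (one_pos.trans_le hp).ne' hpq
    (eLpNorm_lintegral_kernel_mul_le_self hK hK_left hK_right hg hp) ?_
  rw [eLpNorm_exponent_top]
  exact eLpNormEssSup_le_of_ae_enorm_bound (ae_of_all _ fun x ↦
    lintegral_mul_le_eLpNorm (by fun_prop) (hK_left x) (hK_le x) hg hp)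

end Kernel

/-! ### Annuli and Herz norms of nonnegative functions -/

theorem two_rpow_add (x y : ℝ) : (2 : ℝ≥0∞) ^ (x + y) = 2 ^ x * 2 ^ y :=
  ENNReal.rpow_add x y two_ne_zero ENNReal.ofNat_ne_top

theorem two_rpow_ne_top (x : ℝ) : (2 : ℝ≥0∞) ^ x ≠ ⊤ :=
  ENNReal.rpow_ne_top_of_ne_zero two_ne_zero ENNReal.ofNat_ne_top

theorem two_rpow_mono {x y : ℝ} (h : x ≤ y) : (2 : ℝ≥0∞) ^ x ≤ 2 ^ y :=
  ENNReal.rpow_le_rpow_of_exponent_le one_le_two h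

theorem ofReal_two_rpow (x : ℝ) : ENNReal.ofReal ((2 : ℝ) ^ x) = 2 ^ x := by
  rw [← ENNReal.ofReal_rpow_of_pos two_pos, ENNReal.ofReal_ofNat]

section Herz

variable {n : ℕ}

theorem measurableSet_annulus (j : ℤ) : MeasurableSet (annulus n j) :=
  (measurableSet_le measurable_const measurable_norm).inter
    (measurableSet_lt measurable_norm measurable_const)

theorem exists_mem_annulus {x : Euc n} (hx : x ≠ 0) : ∃ j, x ∈ annulus n j := by
  obtain ⟨j, hj⟩ := exists_mem_Ico_zpow (norm_pos_iff.2 hx) (one_lt_two (α := ℝ))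
  exact ⟨j + 1, by simpa [annulus] using hj⟩

theorem volume_annulus_le [NeZero n] (j : ℤ) :
    volume (annulus n j) ≤ volume (Metric.ball (0 : Euc n) 1) * 2 ^ ((j : ℝ) * n) := by
  calc volume (annulus n j) ≤ volume (Metric.ball (0 : Euc n) (2 ^ j)) :=
        measure_mono fun x hx ↦ by simpa using hx.2
    _ = volume (Metric.ball (0 : Euc n) 1) * 2 ^ ((j : ℝ) * n) := by
        rw [Measure.addHaar_ball _ _ (by positivity), mul_comm, finrank_euclideanSpace_fin,
          ← ofReal_two_rpow, Real.rpow_mul two_pos.le, Real.rpow_intCast, Real.rpow_natCast]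

/-- The sequence `2^{js} ‖g‖_{L^q(A_j)}` whose `ℓ^r` norm is the Herz quasi-norm of `g`. Functions
take values in `ℝ≥0∞`, so that the majorants of the proof need no finiteness. -/
def herzSeq (s : ℝ) (q : ℝ≥0∞) (g : Euc n → ℝ≥0∞) (j : ℤ) : ℝ≥0∞ :=
  2 ^ ((j : ℝ) * s) * eLpNorm g q (volume.restrict (annulus n j))

/-- The Herz quasi-norm of a nonnegative extended function, the `ℓ^r` norm being the `L^r` norm for
counting measure. At `r = 0` it differs from `herzNorm`, since `eLpNorm` vanishes there. -/
def herzENorm (s : ℝ) (q r : ℝ≥0∞) (g : Euc n → ℝ≥0∞) : ℝ≥0∞ :=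
  eLpNorm (herzSeq s q g) r .count

theorem herzNorm_eq_herzENorm (s : ℝ) (q : ℝ≥0∞) {r : ℝ≥0∞} (hr : r ≠ 0) (f : Euc n → ℝ) :
    herzNorm n s q r f = herzENorm s q r (‖f ·‖ₑ) := by
  simp only [herzNorm, herzENorm, ofReal_two_rpow,
    eLpNorm_indicator_eq_eLpNorm_restrict (measurableSet_annulus _)]
  split_ifs with hr_top
  · rw [hr_top, eLpNorm_exponent_top, eLpNormEssSup_count]
    simp only [herzSeq, enorm_eq_self, eLpNorm_enorm]
  · rw [eLpNorm_eq_lintegral_rpow_enorm_toReal hr hr_top, lintegral_count]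
    simp only [herzSeq, enorm_eq_self, eLpNorm_enorm]

theorem herzSeq_mono (s : ℝ) (q : ℝ≥0∞) {g h : Euc n → ℝ≥0∞} {j : ℤ}
    (hgh : ∀ x ∈ annulus n j, g x ≤ h x) : herzSeq s q g j ≤ herzSeq s q h j := by
  unfold herzSeq
  gcongr 2 ^ _ * ?_
  refine eLpNorm_mono_enorm_ae ?_
  filter_upwards [ae_restrict_mem (measurableSet_annulus j)] with x hx using hgh x hx

theorem herzSeq_add_le {q : ℝ≥0∞} (hq : 1 ≤ q) (s : ℝ) {g h : Euc n → ℝ≥0∞} (hg : Measurable g)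
    (hh : Measurable h) (j : ℤ) : herzSeq s q (g + h) j ≤ herzSeq s q g j + herzSeq s q h j := by
  unfold herzSeq
  rw [← mul_add]
  gcongr
  exact eLpNorm_add_le hg.aestronglyMeasurable hh.aestronglyMeasurable hq

theorem herzSeq_const_mul_le (s : ℝ) (q c : ℝ≥0∞) {g : Euc n → ℝ≥0∞} (hg : Measurable g) (j : ℤ) :
    herzSeq s q (fun x ↦ c * g x) j ≤ c * herzSeq s q g j := by
  unfold herzSeq
  rw [mul_left_comm]
  gcongr
  exact eLpNorm_const_mul_le hg c q

theorem herzSeq_eq_two_rpow_mul (s s' : ℝ) (q : ℝ≥0∞) (g : Euc n → ℝ≥0∞) (j : ℤ) :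
    herzSeq s q g j = 2 ^ ((j : ℝ) * (s - s')) * herzSeq s' q g j := by
  rw [herzSeq, herzSeq, ← mul_assoc, ← two_rpow_add]
  ring_nf

theorem exists_herzSeq_le_of_exponent_le [NeZero n] (s : ℝ) {q q' : ℝ≥0∞} (hqq' : q ≤ q')
    (hq : q ≠ 0) :
    ∃ K : ℝ≥0∞, K ≠ ⊤ ∧ ∀ g : Euc n → ℝ≥0∞, Measurable g → ∀ j : ℤ,
      herzSeq s q g j ≤ K * herzSeq (s + n * ((q⁻¹).toReal - (q'⁻¹).toReal)) q' g j := by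
  set e := (q⁻¹).toReal - (q'⁻¹).toReal with he_def
  have he : 0 ≤ e := sub_nonneg.2 (ENNReal.toReal_mono (by simpa) (ENNReal.inv_le_inv.2 hqq'))
  set V := volume (Metric.ball (0 : Euc n) 1)
  refine ⟨V ^ e, ENNReal.rpow_ne_top_of_nonneg he measure_ball_lt_top.ne, fun g hg j ↦ ?_⟩
  have hHolder : eLpNorm g q (volume.restrict (annulus n j)) ≤
      eLpNorm g q' (volume.restrict (annulus n j)) * volume (annulus n j) ^ e := by
    simpa [he_def, ENNReal.toReal_inv] using eLpNorm_le_eLpNorm_mul_rpow_measure_univ hqq'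
      (hg.aestronglyMeasurable (μ := volume.restrict (annulus n j)))
  calc herzSeq s q g j
      ≤ 2 ^ ((j : ℝ) * s) *
          (eLpNorm g q' (volume.restrict (annulus n j)) * (V * 2 ^ ((j : ℝ) * n)) ^ e) := by
        unfold herzSeq
        gcongr
        exact hHolder.trans (by gcongr; exact volume_annulus_le j)
    _ = V ^ e * herzSeq (s + n * e) q' g j := by
        rw [herzSeq, ENNReal.mul_rpow_of_nonneg _ _ he, ← ENNReal.rpow_mul, mul_add, two_rpow_add]
        ring_nf

theorem lintegral_le_herzENorm [NeZero n] (g : Euc n → ℝ≥0∞) :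
    ∫⁻ x, g x ≤ herzENorm 0 1 1 g := by
  have hcover : (⋃ j, annulus n j) =ᵐ[volume] univ := by
    refine eventuallyEq_univ.2 ?_
    filter_upwards [compl_mem_ae_iff.2 (measure_singleton (0 : Euc n))] with x hx
    exact mem_iUnion.2 (exists_mem_annulus hx)
  calc ∫⁻ x, g x = ∫⁻ x in ⋃ j, annulus n j, g x := by
        rw [setLIntegral_congr hcover, setLIntegral_univ]
    _ ≤ ∑' j, ∫⁻ x in annulus n j, g x := lintegral_iUnion_le _ _
    _ = herzENorm 0 1 1 g := by
        simp [herzENorm, herzSeq, eLpNorm_one_eq_lintegral_enorm, lintegral_count]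

end Herz

/-! ### The heat kernel -/

theorem lintegral_comp_smul {E : Type*} [NormedAddCommGroup E] [NormedSpace ℝ E]
    [MeasurableSpace E] [BorelSpace E] [FiniteDimensional ℝ E] (m : Measure E)
    [m.IsAddHaarMeasure] {c : ℝ} (hc : c ≠ 0) (g : E → ℝ≥0∞) :
    ∫⁻ x, g (c • x) ∂m = ENNReal.ofReal |(c ^ Module.finrank ℝ E)⁻¹| * ∫⁻ x, g x ∂m := by
  rw [← smul_eq_mul, ← lintegral_smul_measure, ← Measure.map_addHaar_smul m hc]
  exact ((MeasurableEquiv.smul₀ c hc).measurableEmbedding.lintegral_map g).symm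

section Heat

variable {n : ℕ} {t : ℝ}

theorem heatKernel_nonneg (ht : 0 < t) (x y : Euc n) : 0 ≤ heatKernel n t x y := by
  unfold heatKernel
  positivity

theorem heatKernel_comm (t : ℝ) (x y : Euc n) : heatKernel n t x y = heatKernel n t y x := by
  simp only [heatKernel, norm_sub_rev]

theorem heatKernel_le_exp (ht : 1 ≤ t) (x y : Euc n) :
    heatKernel n t x y ≤ Real.exp (-‖x - y‖ ^ 2 / (4 * t)) := by
  refine mul_le_of_le_one_left (Real.exp_nonneg _) (Real.rpow_le_one_of_one_le_of_nonpos ?_ ?_)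
  · nlinarith [Real.pi_gt_three]
  · exact div_nonpos_of_nonpos_of_nonneg (neg_nonpos.2 n.cast_nonneg) zero_le_two

theorem heatKernel_le_one (ht : 1 ≤ t) (x y : Euc n) : heatKernel n t x y ≤ 1 :=
  (heatKernel_le_exp ht x y).trans <| Real.exp_le_one_iff.2 <|
    div_nonpos_of_nonpos_of_nonneg (neg_nonpos.2 (sq_nonneg _)) (by positivity)

theorem measurable_ofReal_heatKernel (n : ℕ) (t : ℝ) :
    Measurable (Function.uncurry fun x y : Euc n ↦ ENNReal.ofReal (heatKernel n t x y)) := by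
  unfold heatKernel
  fun_prop

theorem integral_heatKernel (ht : 0 < t) (x : Euc n) : ∫ y, heatKernel n t x y = 1 := by
  have hgauss := GaussianFourier.integral_rexp_neg_mul_sq_norm (V := Euc n)
    (show 0 < 1 / (4 * t) by positivity)
  have hkernel (y : Euc n) : heatKernel n t x y =
      (4 * Real.pi * t) ^ (-(n : ℝ) / 2) * Real.exp (-(1 / (4 * t)) * ‖x - y‖ ^ 2) := by
    rw [heatKernel]
    ring_nf
  simp_rw [hkernel]
  rw [integral_const_mul,
    integral_sub_left_eq_self (fun v : Euc n ↦ Real.exp (-(1 / (4 * t)) * ‖v‖ ^ 2)), hgauss,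
    div_div_eq_mul_div, div_one, finrank_euclideanSpace_fin,
    show Real.pi * (4 * t) = 4 * Real.pi * t by ring,
    ← Real.rpow_add (by positivity), neg_div, neg_add_cancel, Real.rpow_zero]

theorem lintegral_heatKernel (ht : 0 < t) (x : Euc n) :
    ∫⁻ y, ENNReal.ofReal (heatKernel n t x y) = 1 := by
  have hint : Integrable (heatKernel n t x) :=
    .of_integral_ne_zero (by rw [integral_heatKernel ht]; exact one_ne_zero)
  rw [← ofReal_integral_eq_lintegral_ofReal hint (ae_of_all _ (heatKernel_nonneg ht x)),
    integral_heatKernel ht, ENNReal.ofReal_one]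

theorem heatKernel_smul_smul (ht : 0 < t) {c : ℝ} (hc : 0 < c) (x y : Euc n) :
    heatKernel n t (c • x) (c • y) = (c ^ n)⁻¹ * heatKernel n (t / c ^ 2) x y := by
  have hpre : (4 * Real.pi * t) ^ (-(n : ℝ) / 2) =
      (c ^ n)⁻¹ * (4 * Real.pi * (t / c ^ 2)) ^ (-(n : ℝ) / 2) := by
    have hc_pow : (c ^ n)⁻¹ = (c ^ 2) ^ (-(n : ℝ) / 2) := by
      rw [← Real.rpow_natCast c 2, ← Real.rpow_mul hc.le, Nat.cast_ofNat,
        mul_div_cancel₀ _ two_ne_zero, Real.rpow_neg hc.le, Real.rpow_natCast]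
    rw [hc_pow, ← Real.mul_rpow (by positivity) (by positivity)]
    field_simp
  have hexp : -‖c • x - c • y‖ ^ 2 / (4 * t) = -‖x - y‖ ^ 2 / (4 * (t / c ^ 2)) := by
    rw [← smul_sub, norm_smul, Real.norm_of_nonneg hc.le]
    field_simp
  rw [heatKernel, heatKernel, hpre, hexp, mul_assoc]

/-- The heat semigroup acting on nonnegative extended functions. As a Lebesgue integral it is
meaningful without integrability. -/
def heatAverage (t : ℝ) (g : Euc n → ℝ≥0∞) (x : Euc n) : ℝ≥0∞ :=
  ∫⁻ y, ENNReal.ofReal (heatKernel n t x y) * g y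

theorem measurable_heatAverage (t : ℝ) {g : Euc n → ℝ≥0∞} (hg : Measurable g) :
    Measurable (heatAverage t g) :=
  ((measurable_ofReal_heatKernel n t).mul (hg.comp measurable_snd)).lintegral_prod_right'

theorem enorm_heatSemigroup_le (ht : 0 < t) (f : Euc n → ℝ) (x : Euc n) :
    ‖heatSemigroup n t f x‖ₑ ≤ heatAverage t (‖f ·‖ₑ) x := by
  refine (enorm_integral_le_lintegral_enorm _).trans_eq (lintegral_congr fun y ↦ ?_)
  rw [enorm_mul, Real.enorm_of_nonneg (heatKernel_nonneg ht x y)]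

theorem eLpNorm_heatAverage_le (ht : 1 ≤ t) {g : Euc n → ℝ≥0∞} (hg : Measurable g)
    {p q : ℝ≥0∞} (hp : 1 ≤ p) (hpq : p ≤ q) :
    eLpNorm (heatAverage t g) q volume ≤ eLpNorm g p volume := by
  have ht_pos : 0 < t := one_pos.trans_le ht
  refine eLpNorm_lintegral_kernel_mul_le (measurable_ofReal_heatKernel n t)
    (fun x ↦ (lintegral_heatKernel ht_pos x).le) (fun y ↦ ?_)
    (fun x y ↦ ENNReal.ofReal_le_one.2 (heatKernel_le_one ht x y)) hg hp hpq
  simp_rw [heatKernel_comm t _ y]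
  exact (lintegral_heatKernel ht_pos y).le

theorem heatAverage_smul (ht : 0 < t) {c : ℝ} (hc : 0 < c) (g : Euc n → ℝ≥0∞) (x : Euc n) :
    heatAverage t g (c • x) = heatAverage (t / c ^ 2) (fun y ↦ g (c • y)) x := by
  have hc_ne : ENNReal.ofReal (c ^ n)⁻¹ ≠ 0 := by simpa using by positivity
  refine (ENNReal.mul_right_inj hc_ne ENNReal.ofReal_ne_top).1 ?_
  calc ENNReal.ofReal (c ^ n)⁻¹ * heatAverage t g (c • x)
      = ∫⁻ y, ENNReal.ofReal (heatKernel n t (c • x) (c • y)) * g (c • y) := by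
        rw [lintegral_comp_smul volume hc.ne'
          fun y ↦ ENNReal.ofReal (heatKernel n t (c • x) y) * g y,
          finrank_euclideanSpace_fin, abs_of_pos (by positivity), heatAverage]
    _ = ENNReal.ofReal (c ^ n)⁻¹ * heatAverage (t / c ^ 2) (fun y ↦ g (c • y)) x := by
        simp_rw [heatKernel_smul_smul ht hc, ENNReal.ofReal_mul (inv_pos.2 (pow_pos hc n)).le,
          mul_assoc]
        exact lintegral_const_mul' _ _ ENNReal.ofReal_ne_top

end Heat

/-! ### Far interactions -/

section Far

variable {n : ℕ}

/-- The weight `(1 + |x|)^{-L}`. The heat kernel at unit times is dominated by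
`decayWeight L x * decayWeight L y` away from the diagonal, whatever `L` is. -/
def decayWeight (L : ℕ) (x : Euc n) : ℝ≥0∞ :=
  ENNReal.ofReal ((1 + ‖x‖) ^ L)⁻¹

theorem measurable_decayWeight (L : ℕ) : Measurable (decayWeight L : Euc n → ℝ≥0∞) := by
  unfold decayWeight
  fun_prop

theorem one_add_sq_pow_le_mul_exp (L : ℕ) (s : ℝ) :
    (1 + s ^ 2) ^ L ≤ 16 ^ L * L.factorial * Real.exp 1 * Real.exp (s ^ 2 / 16) := by
  have hfact := Real.pow_div_factorial_le_exp ((1 + s ^ 2) / 16) (by positivity) L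
  calc (1 + s ^ 2) ^ L = 16 ^ L * L.factorial * (((1 + s ^ 2) / 16) ^ L / L.factorial) := by
        rw [div_pow]
        field_simp
    _ ≤ 16 ^ L * L.factorial * Real.exp (1 + s ^ 2 / 16) := by
        gcongr
        exact hfact.trans (Real.exp_le_exp.2 (by linarith))
    _ = 16 ^ L * L.factorial * Real.exp 1 * Real.exp (s ^ 2 / 16) := by
        rw [Real.exp_add, mul_assoc _ (Real.exp 1)]

theorem heatKernel_mul_pow_le (L : ℕ) {t : ℝ} (ht : t ∈ Icc 1 4) {x y : Euc n}
    (hxy : ‖x‖ + ‖y‖ ≤ 3 * (1 + ‖x - y‖)) :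
    heatKernel n t x y * ((1 + ‖x‖) * (1 + ‖y‖)) ^ L ≤
      512 ^ L * L.factorial * Real.exp 1 := by
  set s := ‖x - y‖ with hs
  have hgauss : heatKernel n t x y ≤ Real.exp (-(s ^ 2 / 16)) := by
    refine (heatKernel_le_exp ht.1 x y).trans (Real.exp_le_exp.2 ?_)
    rw [← hs, neg_div, neg_le_neg_iff]
    exact div_le_div_of_nonneg_left (sq_nonneg s) (by linarith [ht.1]) (by linarith [ht.2])
  have hweights : (1 + ‖x‖) * (1 + ‖y‖) ≤ 32 * (1 + s ^ 2) := by
    nlinarith [sq_nonneg (‖x‖ - ‖y‖), sq_nonneg (s - 1), norm_nonneg x, norm_nonneg y,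
      norm_nonneg (x - y)]
  calc heatKernel n t x y * ((1 + ‖x‖) * (1 + ‖y‖)) ^ L
      ≤ Real.exp (-(s ^ 2 / 16)) * (32 * (1 + s ^ 2)) ^ L := by gcongr
    _ = 32 ^ L * Real.exp (-(s ^ 2 / 16)) * (1 + s ^ 2) ^ L := by rw [mul_pow]; ring
    _ ≤ 32 ^ L * Real.exp (-(s ^ 2 / 16)) *
          (16 ^ L * L.factorial * Real.exp 1 * Real.exp (s ^ 2 / 16)) := by
        gcongr
        exact one_add_sq_pow_le_mul_exp L s
    _ = (32 * 16) ^ L * L.factorial * Real.exp 1 *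
          Real.exp (-(s ^ 2 / 16) + s ^ 2 / 16) := by rw [mul_pow, Real.exp_add]; ring
    _ = 512 ^ L * L.factorial * Real.exp 1 := by norm_num

theorem ofReal_heatKernel_le_decayWeight_mul (L : ℕ) {t : ℝ} (ht : t ∈ Icc 1 4) {x y : Euc n}
    (hxy : ‖x‖ + ‖y‖ ≤ 3 * (1 + ‖x - y‖)) :
    ENNReal.ofReal (heatKernel n t x y) ≤
      ENNReal.ofReal (512 ^ L * L.factorial * Real.exp 1) *
        (decayWeight L x * decayWeight L y) := by
  rw [decayWeight, decayWeight, ← ENNReal.ofReal_mul (by positivity), ← mul_inv, ← mul_pow,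
    ← ENNReal.ofReal_mul (by positivity), ← div_eq_mul_inv]
  refine ENNReal.ofReal_le_ofReal ((le_div_iff₀ (by positivity)).2 ?_)
  exact heatKernel_mul_pow_le L ht hxy

theorem decayWeight_le_of_mem_annulus {L : ℕ} {θ c : ℝ} (hcθ : c ≤ θ) (hcL : c ≤ L - θ)
    {k : ℤ} {x : Euc n} (hx : x ∈ annulus n k) :
    decayWeight L x ≤ 2 ^ (L : ℝ) * 2 ^ (-(c * |(k : ℝ)|)) * 2 ^ (-(k * θ)) := by
  rw [← two_rpow_add, ← two_rpow_add, ← ofReal_two_rpow]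
  refine ENNReal.ofReal_le_ofReal ?_
  have hbase : (2 : ℝ) ^ (max ((k : ℝ) - 1) 0) ≤ 1 + ‖x‖ := by
    rcases le_total ((k : ℝ) - 1) 0 with hk | hk
    · simp [max_eq_right hk]
    · have hx_lower := hx.1
      rw [← Real.rpow_intCast, Int.cast_sub, Int.cast_one] at hx_lower
      rw [max_eq_left hk]
      linarith
  have hexp : (L : ℝ) + -(c * |(k : ℝ)|) + -(k * θ) ≥ -(max ((k : ℝ) - 1) 0 * L) := by
    rcases le_total (k : ℝ) 0 with hk | hk
    · rw [max_eq_right (by linarith), abs_of_nonpos hk]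
      nlinarith [(Nat.cast_nonneg L : (0 : ℝ) ≤ L)]
    · rw [abs_of_nonneg hk]
      nlinarith [le_max_left ((k : ℝ) - 1) 0]
  calc ((1 + ‖x‖) ^ L)⁻¹ ≤ (((2 : ℝ) ^ (max ((k : ℝ) - 1) 0)) ^ L)⁻¹ := by gcongr
    _ = 2 ^ (-(max ((k : ℝ) - 1) 0 * L)) := by
        rw [Real.rpow_neg two_pos.le, Real.rpow_mul two_pos.le, Real.rpow_natCast]
    _ ≤ 2 ^ ((L : ℝ) + -(c * |(k : ℝ)|) + -(k * θ)) :=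
        Real.rpow_le_rpow_of_exponent_le one_le_two hexp

theorem exists_herzSeq_decayWeight_mul_le [NeZero n] {L : ℕ} {s s' θ c : ℝ} {q q' : ℝ≥0∞}
    (hq : q ≠ 0) (hqq' : q ≤ q') (hθ : s + n * ((q⁻¹).toReal - (q'⁻¹).toReal) = s' + θ)
    (hcθ : c ≤ θ) (hcL : c ≤ L - θ) :
    ∃ K : ℝ≥0∞, K ≠ ⊤ ∧ ∀ g : Euc n → ℝ≥0∞, Measurable g → ∀ k : ℤ,
      herzSeq s q (fun x ↦ decayWeight L x * g x) k ≤
        K * (2 ^ (-(c * |(k : ℝ)|)) * herzSeq s' q' g k) := by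
  obtain ⟨V, hV, hembed⟩ := exists_herzSeq_le_of_exponent_le (n := n) s hqq' hq
  refine ⟨2 ^ (L : ℝ) * V, ENNReal.mul_ne_top (two_rpow_ne_top _) hV, fun g hg k ↦ ?_⟩
  calc herzSeq s q (fun x ↦ decayWeight L x * g x) k
      ≤ herzSeq s q (fun x ↦ 2 ^ (L : ℝ) * 2 ^ (-(c * |(k : ℝ)|)) * 2 ^ (-(k * θ)) * g x) k :=
        herzSeq_mono s q fun x hx ↦ by
          gcongr
          exact decayWeight_le_of_mem_annulus hcθ hcL hx
    _ ≤ 2 ^ (L : ℝ) * 2 ^ (-(c * |(k : ℝ)|)) * 2 ^ (-(k * θ)) * (V * herzSeq (s' + θ) q' g k) :=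
        (herzSeq_const_mul_le s q _ hg k).trans (by rw [← hθ]; gcongr; exact hembed g hg k)
    _ = 2 ^ (L : ℝ) * V * (2 ^ (-(c * |(k : ℝ)|)) *
          (2 ^ (-(k * θ)) * 2 ^ (k * θ) * herzSeq s' q' g k)) := by
        rw [herzSeq_eq_two_rpow_mul (s' + θ) s', add_sub_cancel_left]
        ring
    _ = 2 ^ (L : ℝ) * V * (2 ^ (-(c * |(k : ℝ)|)) * herzSeq s' q' g k) := by
        rw [← two_rpow_add, neg_add_cancel, ENNReal.rpow_zero, one_mul]

theorem exists_herzENorm_decayWeight_mul_le [NeZero n] {L : ℕ} {s s' θ : ℝ} {q q' r r' : ℝ≥0∞}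
    (hq : q ≠ 0) (hqq' : q ≤ q') (hr : r ≠ 0) (hr' : r' ≠ 0)
    (hθ : s + n * ((q⁻¹).toReal - (q'⁻¹).toReal) = s' + θ)
    (hθ_nonneg : 0 ≤ θ) (hθL : θ < L) (hθ_or : 0 < θ ∨ r' ≤ r) :
    ∃ K : ℝ≥0∞, K ≠ ⊤ ∧ ∀ g : Euc n → ℝ≥0∞, Measurable g →
      herzENorm s q r (fun x ↦ decayWeight L x * g x) ≤ K * herzENorm s' q' r' g := by
  have hc : 0 ≤ min θ (L - θ) := le_min hθ_nonneg (sub_nonneg.2 hθL.le)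
  obtain ⟨K₁, hK₁, hterm⟩ := exists_herzSeq_decayWeight_mul_le hq hqq' hθ
    (min_le_left θ (L - θ)) (min_le_right θ (L - θ))
  obtain ⟨K₂, hK₂, hseq⟩ := exists_eLpNorm_two_rpow_neg_mul_abs_mul_le hc hr hr'
    (hθ_or.imp_left fun h ↦ lt_min h (sub_pos.2 hθL))
  refine ⟨K₁ * K₂, ENNReal.mul_ne_top hK₁ hK₂, fun g hg ↦ ?_⟩
  calc herzENorm s q r (fun x ↦ decayWeight L x * g x)
      ≤ K₁ * eLpNorm (fun k : ℤ ↦ 2 ^ (-(min θ (L - θ) * |(k : ℝ)|)) * herzSeq s' q' g k)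
          r .count :=
        (eLpNorm_mono_enorm (hterm g hg)).trans (eLpNorm_const_mul_le .of_discrete K₁ r)
    _ ≤ K₁ * (K₂ * herzENorm s' q' r' g) := by gcongr; exact hseq _
    _ = K₁ * K₂ * herzENorm s' q' r' g := (mul_assoc ..).symm

theorem herzENorm_decayWeight_lt_top [NeZero n] {L : ℕ} {s : ℝ} {q r : ℝ≥0∞} (hq : q ≠ 0)
    (hr : r ≠ 0) (hs : 0 ≤ s + n * (q⁻¹).toReal) (hsL : s + n * (q⁻¹).toReal < L)
    (hs_zero : s + n * (q⁻¹).toReal = 0 → r = ⊤) :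
    herzENorm s q r (decayWeight L : Euc n → ℝ≥0∞) < ⊤ := by
  obtain ⟨K, hK, hmul⟩ := exists_herzENorm_decayWeight_mul_le (n := n) (s := s) (s' := 0) (r' := ⊤)
    (θ := s + n * (q⁻¹).toReal) hq le_top hr ENNReal.top_ne_zero (by simp) hs hsL
    (hs.eq_or_lt.symm.imp_right fun h ↦ (hs_zero h.symm).ge)
  have hone : herzENorm 0 ⊤ ⊤ (1 : Euc n → ℝ≥0∞) ≤ 1 := by
    simp only [herzENorm, eLpNorm_exponent_top, eLpNormEssSup_count, herzSeq, mul_zero,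
      ENNReal.rpow_zero, one_mul, enorm_eq_self]
    exact iSup_le fun j ↦ eLpNormEssSup_le_of_ae_enorm_bound (ae_of_all _ fun _ ↦ le_rfl)
  calc herzENorm s q r (decayWeight L) ≤ K * herzENorm 0 ⊤ ⊤ (1 : Euc n → ℝ≥0∞) := by
        simpa using hmul 1 measurable_one
    _ ≤ K * 1 := by gcongr
    _ < ⊤ := by simpa using hK.lt_top

theorem exists_lintegral_decayWeight_mul_le [NeZero n] {L : ℕ} {s : ℝ} {p r : ℝ≥0∞}
    (hp : 1 ≤ p) (hr : r ≠ 0) (hsL : n - L < s + n * (p⁻¹).toReal)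
    (hsn : s + n * (p⁻¹).toReal ≤ n) (hs_or : s + n * (p⁻¹).toReal < n ∨ r ≤ 1) :
    ∃ K : ℝ≥0∞, K ≠ ⊤ ∧ ∀ g : Euc n → ℝ≥0∞, Measurable g →
      ∫⁻ y, decayWeight L y * g y ≤ K * herzENorm s p r g := by
  obtain ⟨K, hK, hmul⟩ := exists_herzENorm_decayWeight_mul_le (n := n) (L := L) (s := 0) (s' := s)
    (θ := n - (s + n * (p⁻¹).toReal)) one_ne_zero hp one_ne_zero hr (by simp; ring)
    (sub_nonneg.2 hsn) (by linarith) (hs_or.imp_left sub_pos.2)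
  exact ⟨K, hK, fun g hg ↦ (lintegral_le_herzENorm _).trans (hmul g hg)⟩

end Far

/-! ### Near interactions -/

section Near

variable {n : ℕ}

/-- The points `y` at which `|x - y|` may be much smaller than `|x| + |y|` for some `x` in
`annulus n j`: the annulus and its two neighbours. Distances up to `1` are immaterial at unit
times, so no points are singled out if `j ≤ 0`, when the annulus lies in the unit ball. -/
def nearSet (n : ℕ) (j : ℤ) : Set (Euc n) :=
  {y | 0 < j ∧ (y ∈ annulus n (j - 1) ∨ y ∈ annulus n j ∨ y ∈ annulus n (j + 1))}

theorem measurableSet_nearSet (j : ℤ) : MeasurableSet (nearSet n j) :=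
  (MeasurableSet.const (0 < j)).inter <|
    (measurableSet_annulus _).union <| (measurableSet_annulus _).union (measurableSet_annulus _)

theorem nearSet_of_nonpos {j : ℤ} (hj : j ≤ 0) : nearSet n j = ∅ :=
  eq_empty_of_forall_notMem fun _ hy ↦ hj.not_gt hy.1

theorem norm_add_norm_le_of_notMem_nearSet {j : ℤ} {x y : Euc n} (hx : x ∈ annulus n j)
    (hy : y ∉ nearSet n j) : ‖x‖ + ‖y‖ ≤ 3 * (1 + ‖x - y‖) := by
  have hy_le : ‖y‖ ≤ ‖x‖ + ‖x - y‖ := by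
    simpa [norm_sub_rev] using norm_le_insert x y
  have hx_le : ‖x‖ ≤ ‖y‖ + ‖x - y‖ := by
    simpa [norm_sub_rev] using norm_le_insert' x y
  rcases le_or_gt j 0 with hj | hj
  · have : ‖x‖ < 1 := hx.2.trans_le (zpow_le_one_of_nonpos₀ one_le_two hj)
    linarith [norm_nonneg (x - y)]
  obtain ⟨hx_lower, hx_upper⟩ := hx
  have hpow : (2 : ℝ) ^ (j - 1) = 2 * 2 ^ (j - 1 - 1) := by
    rw [← zpow_one_add₀ two_ne_zero]; ring_nf
  have hpow' : (2 : ℝ) ^ (j + 1) = 2 * 2 ^ j := by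
    rw [← zpow_one_add₀ two_ne_zero]; ring_nf
  have hy_or : ‖y‖ < 2 ^ (j - 1 - 1) ∨ (2 : ℝ) ^ (j + 1) ≤ ‖y‖ := by
    by_contra! hy'
    refine hy ⟨hj, ?_⟩
    rcases lt_or_ge ‖y‖ (2 ^ (j - 1)) with h₁ | h₁
    · exact .inl ⟨hy'.1, h₁⟩
    rcases lt_or_ge ‖y‖ (2 ^ j) with h₂ | h₂
    · exact .inr (.inl ⟨h₁, h₂⟩)
    · exact .inr (.inr ⟨by rwa [add_sub_cancel_right], hy'.2⟩)
  rcases hy_or with h | h <;> linarith [norm_nonneg (x - y)]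

theorem eLpNorm_indicator_nearSet_le {p : ℝ≥0∞} (hp : 1 ≤ p) {g : Euc n → ℝ≥0∞}
    (hg : Measurable g) (j : ℤ) :
    eLpNorm ((nearSet n j).indicator g) p volume ≤
      eLpNorm g p (volume.restrict (annulus n (j - 1))) +
        (eLpNorm g p (volume.restrict (annulus n j)) +
          eLpNorm g p (volume.restrict (annulus n (j + 1)))) := by
  have hmeas (i : ℤ) : AEStronglyMeasurable ((annulus n i).indicator g) volume :=
    (hg.indicator (measurableSet_annulus i)).aestronglyMeasurable
  simp only [← eLpNorm_indicator_eq_eLpNorm_restrict (measurableSet_annulus _)]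
  calc eLpNorm ((nearSet n j).indicator g) p volume
      ≤ eLpNorm ((annulus n (j - 1)).indicator g +
          ((annulus n j).indicator g + (annulus n (j + 1)).indicator g)) p volume := by
        refine eLpNorm_mono_enorm fun y ↦ ?_
        simp only [enorm_eq_self, Pi.add_apply]
        by_cases hy : y ∈ nearSet n j
        · rcases hy.2 with h | h | h <;> simp only [hy, h, indicator_of_mem]
          exacts [le_self_add, le_self_add.trans le_add_self, le_add_self.trans le_add_self]
        · simp [hy]
    _ ≤ _ := (eLpNorm_add_le (hmeas _) ((hmeas _).add (hmeas _)) hp).trans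
        (by gcongr; exact eLpNorm_add_le (hmeas _) (hmeas _) hp)

theorem two_rpow_mul_eLpNorm_restrict_annulus_le (s : ℝ) (q : ℝ≥0∞) (g : Euc n → ℝ≥0∞) {i j : ℤ}
    (hij : |(j : ℝ) - i| ≤ 1) :
    2 ^ ((j : ℝ) * s) * eLpNorm g q (volume.restrict (annulus n i)) ≤
      2 ^ |s| * herzSeq s q g i := by
  rw [herzSeq, ← mul_assoc, ← two_rpow_add]
  gcongr ?_ * _
  refine two_rpow_mono ?_
  have hshift : |((j : ℝ) - i) * s| ≤ |s| := by
    rw [abs_mul]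
    exact mul_le_of_le_one_left (abs_nonneg _) hij
  linarith [le_abs_self (((j : ℝ) - i) * s)]

theorem exists_herzSeq_heatAverage_nearSet_le [NeZero n] {s s' δ : ℝ} {p q : ℝ≥0∞} (hp : 1 ≤ p)
    (hq : 1 ≤ q) (hδ : δ = s' - s - n * ((q⁻¹).toReal - ((max p q)⁻¹).toReal)) :
    ∃ K : ℝ≥0∞, K ≠ ⊤ ∧ ∀ t : ℝ, 1 ≤ t → ∀ g : Euc n → ℝ≥0∞, Measurable g → ∀ j : ℤ,
      herzSeq s q (heatAverage t ((nearSet n j).indicator g)) j ≤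
        K * (2 ^ (-(δ * |(j : ℝ)|)) *
          (herzSeq s' p g (j - 1) + (herzSeq s' p g j + herzSeq s' p g (j + 1)))) := by
  obtain ⟨V, hV, hembed⟩ :=
    exists_herzSeq_le_of_exponent_le (n := n) s (le_max_right p q) (one_pos.trans_le hq).ne'
  refine ⟨V * 2 ^ |s'|, ENNReal.mul_ne_top hV (two_rpow_ne_top _), fun t ht g hg j ↦ ?_⟩
  rcases le_or_gt j 0 with hj | hj
  · have hzero : heatAverage t ((nearSet n j).indicator g) = 0 := by
      ext x
      simp [nearSet_of_nonpos hj, heatAverage]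
    simp [hzero, herzSeq]
  have hg_near : Measurable ((nearSet n j).indicator g) := hg.indicator (measurableSet_nearSet j)
  have hgain : (2 : ℝ≥0∞) ^ ((j : ℝ) * (s' - δ)) =
      2 ^ (-(δ * |(j : ℝ)|)) * 2 ^ ((j : ℝ) * s') := by
    rw [← two_rpow_add, abs_of_pos (Int.cast_pos.2 hj)]
    ring_nf
  have hshift (i : ℤ) (hij : |(j : ℝ) - i| ≤ 1) :=
    two_rpow_mul_eLpNorm_restrict_annulus_le s' p g hij
  calc herzSeq s q (heatAverage t ((nearSet n j).indicator g)) j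
      ≤ V * herzSeq (s' - δ) (max p q) (heatAverage t ((nearSet n j).indicator g)) j := by
        rw [show s' - δ = s + n * ((q⁻¹).toReal - ((max p q)⁻¹).toReal) by rw [hδ]; ring]
        exact hembed _ (measurable_heatAverage t hg_near) j
    _ ≤ V * (2 ^ ((j : ℝ) * (s' - δ)) * eLpNorm ((nearSet n j).indicator g) p volume) := by
        unfold herzSeq
        gcongr
        exact (eLpNorm_restrict_le _ _ _ _).trans
          (eLpNorm_heatAverage_le ht hg_near hp (le_max_left p q))
    _ ≤ V * (2 ^ (-(δ * |(j : ℝ)|)) *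
          (2 ^ ((j : ℝ) * s') * eLpNorm g p (volume.restrict (annulus n (j - 1))) +
            (2 ^ ((j : ℝ) * s') * eLpNorm g p (volume.restrict (annulus n j)) +
              2 ^ ((j : ℝ) * s') * eLpNorm g p (volume.restrict (annulus n (j + 1)))))) := by
        rw [hgain, ← mul_add, ← mul_add, mul_assoc (2 ^ _)]
        gcongr
        exact eLpNorm_indicator_nearSet_le hp hg j
    _ ≤ V * (2 ^ (-(δ * |(j : ℝ)|)) * (2 ^ |s'| * herzSeq s' p g (j - 1) +
          (2 ^ |s'| * herzSeq s' p g j + 2 ^ |s'| * herzSeq s' p g (j + 1)))) := by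
        gcongr V * (_ * (?_ + (?_ + ?_)))
        exacts [hshift (j - 1) (by simp), hshift j (by simp), hshift (j + 1) (by simp)]
    _ = V * 2 ^ |s'| * (2 ^ (-(δ * |(j : ℝ)|)) *
          (herzSeq s' p g (j - 1) + (herzSeq s' p g j + herzSeq s' p g (j + 1)))) := by ring

theorem exists_eLpNorm_add_neighbours_le (r : ℝ≥0∞) :
    ∃ K : ℝ≥0∞, K ≠ ⊤ ∧ ∀ a : ℤ → ℝ≥0∞,
      eLpNorm (fun j ↦ a (j - 1) + (a j + a (j + 1))) r .count ≤ K * eLpNorm a r .count := by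
  have hC : LpAddConst r ≠ ⊤ := (LpAddConst_lt_top r).ne
  refine ⟨LpAddConst r * (1 + LpAddConst r * (1 + 1)), by finiteness, fun a ↦ ?_⟩
  have hmeas (b : ℤ → ℝ≥0∞) : AEStronglyMeasurable b .count :=
    Measurable.of_discrete.aestronglyMeasurable
  calc eLpNorm (fun j ↦ a (j - 1) + (a j + a (j + 1))) r .count
      ≤ LpAddConst r * (eLpNorm (fun j ↦ a (j + -1)) r .count + LpAddConst r *
          (eLpNorm a r .count + eLpNorm (fun j ↦ a (j + 1)) r .count)) :=
        (eLpNorm_add_le' (hmeas _) (hmeas _) r).trans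
          (by gcongr; exacts [le_rfl, eLpNorm_add_le' (hmeas _) (hmeas _) r])
    _ = LpAddConst r * (1 + LpAddConst r * (1 + 1)) * eLpNorm a r .count := by
        rw [eLpNorm_count_comp_add_right, eLpNorm_count_comp_add_right]
        ring

theorem exists_eLpNorm_herzSeq_heatAverage_nearSet_le [NeZero n] {s s' δ : ℝ} {p q r r' : ℝ≥0∞}
    (hp : 1 ≤ p) (hq : 1 ≤ q) (hr : r ≠ 0) (hr' : r' ≠ 0)
    (hδ : δ = s' - s - n * ((q⁻¹).toReal - ((max p q)⁻¹).toReal))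
    (hδ_nonneg : 0 ≤ δ) (hδ_or : 0 < δ ∨ r' ≤ r) :
    ∃ K : ℝ≥0∞, K ≠ ⊤ ∧ ∀ t : ℝ, 1 ≤ t → ∀ g : Euc n → ℝ≥0∞, Measurable g →
      eLpNorm (fun j ↦ herzSeq s q (heatAverage t ((nearSet n j).indicator g)) j) r .count ≤
        K * herzENorm s' p r' g := by
  obtain ⟨K₁, hK₁, hterm⟩ := exists_herzSeq_heatAverage_nearSet_le hp hq hδ
  obtain ⟨K₂, hK₂, hseq⟩ := exists_eLpNorm_two_rpow_neg_mul_abs_mul_le hδ_nonneg hr hr' hδ_or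
  obtain ⟨K₃, hK₃, hneighbours⟩ := exists_eLpNorm_add_neighbours_le r'
  refine ⟨K₁ * (K₂ * K₃), by finiteness, fun t ht g hg ↦ ?_⟩
  calc eLpNorm (fun j ↦ herzSeq s q (heatAverage t ((nearSet n j).indicator g)) j) r .count
      ≤ K₁ * eLpNorm (fun j : ℤ ↦ 2 ^ (-(δ * |(j : ℝ)|)) *
          (herzSeq s' p g (j - 1) + (herzSeq s' p g j + herzSeq s' p g (j + 1)))) r .count :=
        (eLpNorm_mono_enorm (hterm t ht g hg)).trans (eLpNorm_const_mul_le .of_discrete K₁ r)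
    _ ≤ K₁ * (K₂ * (K₃ * herzENorm s' p r' g)) := by
        gcongr
        exact (hseq _).trans (by gcongr; exact hneighbours _)
    _ = K₁ * (K₂ * K₃) * herzENorm s' p r' g := by ring

end Near

/-! ### Unit times -/

section UnitTimes

variable {n : ℕ}

theorem heatAverage_le_add_decayWeight_mul (L : ℕ) {t : ℝ} (ht : t ∈ Icc 1 4)
    {g : Euc n → ℝ≥0∞} (hg : Measurable g) {j : ℤ} {x : Euc n} (hx : x ∈ annulus n j) :
    heatAverage t g x ≤ heatAverage t ((nearSet n j).indicator g) x +
      ENNReal.ofReal (512 ^ L * L.factorial * Real.exp 1) *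
        (∫⁻ y, decayWeight L y * g y) * decayWeight L x := by
  set C := ENNReal.ofReal (512 ^ L * L.factorial * Real.exp 1)
  have hmeas : Measurable fun y ↦ decayWeight L y * g y := (measurable_decayWeight L).mul hg
  have hpointwise (y : Euc n) : ENNReal.ofReal (heatKernel n t x y) * g y ≤
      ENNReal.ofReal (heatKernel n t x y) * (nearSet n j).indicator g y +
        C * decayWeight L x * (decayWeight L y * g y) := by
    by_cases hy : y ∈ nearSet n j
    · rw [indicator_of_mem hy]
      exact le_self_add
    · rw [indicator_of_notMem hy, mul_zero, zero_add, ← mul_assoc, mul_assoc C]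
      gcongr
      exact ofReal_heatKernel_le_decayWeight_mul L ht (norm_add_norm_le_of_notMem_nearSet hx hy)
  calc heatAverage t g x
      ≤ heatAverage t ((nearSet n j).indicator g) x +
          C * decayWeight L x * ∫⁻ y, decayWeight L y * g y := by
        rw [← lintegral_const_mul _ hmeas, heatAverage, heatAverage,
          ← lintegral_add_right _ (hmeas.const_mul _)]
        exact lintegral_mono hpointwise
    _ = _ := by ring

theorem exists_herzENorm_heatAverage_le_add (L : ℕ) (s : ℝ) {q : ℝ≥0∞} (hq : 1 ≤ q) (r : ℝ≥0∞) :
    ∃ K : ℝ≥0∞, K ≠ ⊤ ∧ ∀ t ∈ Icc (1 : ℝ) 4, ∀ g : Euc n → ℝ≥0∞, Measurable g →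
      herzENorm s q r (heatAverage t g) ≤ K *
        (eLpNorm (fun j ↦ herzSeq s q (heatAverage t ((nearSet n j).indicator g)) j) r .count +
          (∫⁻ y, decayWeight L y * g y) * herzENorm s q r (decayWeight L : Euc n → ℝ≥0∞)) := by
  set C := ENNReal.ofReal (512 ^ L * L.factorial * Real.exp 1)
  have hLp : LpAddConst r ≠ ⊤ := (LpAddConst_lt_top r).ne
  refine ⟨LpAddConst r * (1 + C), by finiteness, fun t ht g hg ↦ ?_⟩
  set near : ℤ → ℝ≥0∞ := fun j ↦ herzSeq s q (heatAverage t ((nearSet n j).indicator g)) j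
  set I := ∫⁻ y, decayWeight L y * g y
  set w : Euc n → ℝ≥0∞ := decayWeight L
  have hw : Measurable w := measurable_decayWeight L
  have hterm (j : ℤ) : herzSeq s q (heatAverage t g) j ≤
      near j + C * I * herzSeq s q w j := by
    refine (herzSeq_mono s q fun x hx ↦ heatAverage_le_add_decayWeight_mul L ht hg hx).trans ?_
    refine (herzSeq_add_le hq s
      (measurable_heatAverage t (hg.indicator (measurableSet_nearSet j)))
      (hw.const_mul _) j).trans ?_
    gcongr
    exact herzSeq_const_mul_le s q _ hw j
  calc herzENorm s q r (heatAverage t g)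
      ≤ eLpNorm (near + fun j ↦ C * I * herzSeq s q w j) r .count :=
        eLpNorm_mono_enorm hterm
    _ ≤ LpAddConst r * (eLpNorm near r .count +
          C * I * herzENorm s q r w) := by
        refine (eLpNorm_add_le' Measurable.of_discrete.aestronglyMeasurable
          Measurable.of_discrete.aestronglyMeasurable r).trans ?_
        gcongr
        exact eLpNorm_const_mul_le .of_discrete _ r
    _ ≤ LpAddConst r * ((1 + C) * eLpNorm near r .count +
          (1 + C) * (I * herzENorm s q r w)) := by
        rw [mul_assoc C]
        gcongr
        · exact le_mul_of_one_le_left' le_self_add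
        · exact le_add_self
    _ = _ := by ring

theorem exists_herzENorm_heatAverage_le_of_mem_Icc [NeZero n] {μ ν : ℝ} {p q r r₀ : ℝ≥0∞}
    (hp : 1 ≤ p) (hq : 1 ≤ q) (hr : r ≠ 0) (hr₀ : r₀ ≠ 0) (hμν : ν ≤ μ)
    (hν : 0 ≤ ν + n * (q⁻¹).toReal) (hνμ : ν + n * (q⁻¹).toReal ≤ μ + n * (p⁻¹).toReal)
    (hμ : μ + n * (p⁻¹).toReal ≤ n) (hν_zero : ν + n * (q⁻¹).toReal = 0 → r = ⊤)
    (hμ_or : μ + n * (p⁻¹).toReal < n ∨ r₀ ≤ 1)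
    (hμν_or : (ν < μ ∧ ν + n * (q⁻¹).toReal < μ + n * (p⁻¹).toReal) ∨ r₀ ≤ r) :
    ∃ K : ℝ≥0∞, K ≠ ⊤ ∧ ∀ t ∈ Icc (1 : ℝ) 4, ∀ g : Euc n → ℝ≥0∞, Measurable g →
      herzENorm ν q r (heatAverage t g) ≤ K * herzENorm μ p r₀ g := by
  set δ := μ - ν - n * ((q⁻¹).toReal - ((max p q)⁻¹).toReal) with hδ
  have hδ_eq : δ = μ - ν ∨ δ = μ + n * (p⁻¹).toReal - (ν + n * (q⁻¹).toReal) := by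
    rcases le_total p q with hpq | hqp
    · exact .inl (by rw [hδ, max_eq_right hpq]; ring)
    · exact .inr (by rw [hδ, max_eq_left hqp]; ring)
  have hδ_nonneg : 0 ≤ δ := by rcases hδ_eq with h | h <;> linarith
  have hδ_or : 0 < δ ∨ r₀ ≤ r :=
    hμν_or.imp_left fun h ↦ by rcases hδ_eq with h' | h' <;> linarith [h.1, h.2]
  obtain ⟨K₁, hK₁, hnear⟩ :=
    exists_eLpNorm_herzSeq_heatAverage_nearSet_le hp hq hr hr₀ hδ hδ_nonneg hδ_or
  obtain ⟨K₂, hK₂, hsplit⟩ := exists_herzENorm_heatAverage_le_add (n := n) (n + 1) ν hq r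
  obtain ⟨K₃, hK₃, hfar⟩ := exists_lintegral_decayWeight_mul_le (n := n) (L := n + 1) (r := r₀) hp
    hr₀ (by push_cast; linarith) hμ hμ_or
  have hweight : herzENorm ν q r (decayWeight (n + 1) : Euc n → ℝ≥0∞) < ⊤ :=
    herzENorm_decayWeight_lt_top (one_pos.trans_le hq).ne' hr hν (by push_cast; linarith) hν_zero
  set W := herzENorm ν q r (decayWeight (n + 1) : Euc n → ℝ≥0∞)
  refine ⟨K₂ * (K₁ + K₃ * W), by finiteness, fun t ht g hg ↦ ?_⟩
  calc herzENorm ν q r (heatAverage t g)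
      ≤ K₂ * (K₁ * herzENorm μ p r₀ g + K₃ * herzENorm μ p r₀ g * W) := by
        refine (hsplit t ht g hg).trans ?_
        gcongr
        exacts [hnear t ht.1 g hg, hfar g hg]
    _ = K₂ * (K₁ + K₃ * W) * herzENorm μ p r₀ g := by ring

end UnitTimes

/-! ### Scaling -/

section Scaling

variable {n : ℕ}

theorem preimage_two_zpow_smul_annulus (m j : ℤ) :
    (fun x : Euc n ↦ (2 : ℝ) ^ m • x) ⁻¹' annulus n (j + m) = annulus n j := by
  ext x
  simp only [annulus, mem_preimage, mem_ofPred_eq, norm_smul, norm_zpow, Real.norm_ofNat]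
  rw [add_comm j m, add_sub_assoc, zpow_add₀ two_ne_zero, zpow_add₀ two_ne_zero,
    mul_le_mul_iff_right₀ (by positivity), mul_lt_mul_iff_right₀ (by positivity)]

theorem map_two_zpow_smul_restrict_annulus (m j : ℤ) :
    (volume.restrict (annulus n j)).map (fun x ↦ (2 : ℝ) ^ m • x) =
      (2 : ℝ≥0∞) ^ (-((m : ℝ) * n)) • volume.restrict (annulus n (j + m)) := by
  have htwo : (2 : ℝ) ^ m ≠ 0 := by positivity
  have hjacobian : ENNReal.ofReal |(((2 : ℝ) ^ m) ^ n)⁻¹| = 2 ^ (-((m : ℝ) * n)) := by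
    rw [abs_of_pos (by positivity), ← ofReal_two_rpow, Real.rpow_neg two_pos.le,
      Real.rpow_mul two_pos.le, Real.rpow_intCast, Real.rpow_natCast]
  rw [← preimage_two_zpow_smul_annulus m j,
    ← (measurableEmbedding_const_smul₀ htwo).restrict_map,
    Measure.map_addHaar_smul _ htwo, finrank_euclideanSpace_fin, hjacobian, Measure.restrict_smul]

theorem herzSeq_comp_two_zpow_smul (s : ℝ) (q : ℝ≥0∞) (g : Euc n → ℝ≥0∞) (m j : ℤ) :
    herzSeq s q (fun x ↦ g ((2 : ℝ) ^ m • x)) j =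
      2 ^ (-(m * (s + n * (q⁻¹).toReal))) * herzSeq s q g (j + m) := by
  have htwo : (2 : ℝ) ^ m ≠ 0 := by positivity
  have hnorm : eLpNorm (fun x ↦ g ((2 : ℝ) ^ m • x)) q (volume.restrict (annulus n j)) =
      2 ^ (-((m : ℝ) * n) * (q⁻¹).toReal) *
        eLpNorm g q (volume.restrict (annulus n (j + m))) := by
    have hmap := (measurableEmbedding_const_smul₀ htwo).eLpNorm_map_measure
      (g := g) (p := q) (μ := volume.restrict (annulus n j))
    rw [map_two_zpow_smul_restrict_annulus, eLpNorm_smul_measure_of_ne_zero (by simp),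
      smul_eq_mul, ← ENNReal.rpow_mul, one_div] at hmap
    exact hmap.symm
  rw [herzSeq, herzSeq, hnorm, ← mul_assoc, ← mul_assoc, ← two_rpow_add, ← two_rpow_add]
  push_cast
  ring_nf

theorem herzENorm_comp_two_zpow_smul_le (s : ℝ) (q r : ℝ≥0∞) (g : Euc n → ℝ≥0∞) (m : ℤ) :
    herzENorm s q r (fun x ↦ g ((2 : ℝ) ^ m • x)) ≤
      2 ^ (-(m * (s + n * (q⁻¹).toReal))) * herzENorm s q r g := by
  simp_rw [herzENorm, ← eLpNorm_count_comp_add_right (herzSeq s q g) r m]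
  exact (eLpNorm_mono_enorm fun j ↦ (herzSeq_comp_two_zpow_smul s q g m j).le).trans
    (eLpNorm_const_mul_le .of_discrete _ r)

theorem herzENorm_heatAverage_le_of_unit_times {μ ν : ℝ} {p q r r₀ K : ℝ≥0∞}
    (hunit : ∀ t ∈ Icc (1 : ℝ) 4, ∀ g : Euc n → ℝ≥0∞, Measurable g →
      herzENorm ν q r (heatAverage t g) ≤ K * herzENorm μ p r₀ g)
    {m : ℤ} {t : ℝ} (ht : t ∈ Icc ((4 : ℝ) ^ m) (4 ^ (m + 1))) {g : Euc n → ℝ≥0∞}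
    (hg : Measurable g) :
    herzENorm ν q r (heatAverage t g) ≤
      K * 2 ^ (m * (ν + n * (q⁻¹).toReal - (μ + n * (p⁻¹).toReal))) * herzENorm μ p r₀ g := by
  have hfour : (4 : ℝ) ^ m = (2 ^ m) ^ 2 := by
    rw [← zpow_natCast, ← zpow_mul, mul_comm, zpow_mul]
    norm_num
  have hrescale : heatAverage t g =
      fun x ↦ heatAverage (t / 4 ^ m) (fun y ↦ g ((2 : ℝ) ^ m • y)) ((2 : ℝ) ^ (-m) • x) := by
    ext x
    rw [hfour, ← heatAverage_smul ((by positivity : (0 : ℝ) < 4 ^ m).trans_le ht.1)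
      (by positivity), smul_smul, ← zpow_add₀ two_ne_zero, add_neg_cancel, zpow_zero, one_smul]
  have ht_unit : t / 4 ^ m ∈ Icc (1 : ℝ) 4 := by
    have hpos : (0 : ℝ) < 4 ^ m := by positivity
    rw [mem_Icc, one_le_div hpos, div_le_iff₀ hpos, ← zpow_one_add₀ four_ne_zero, add_comm 1 m]
    exact ht
  calc herzENorm ν q r (heatAverage t g)
      ≤ 2 ^ (-((-m : ℤ) * (ν + n * (q⁻¹).toReal))) *
          herzENorm ν q r (heatAverage (t / 4 ^ m) fun y ↦ g ((2 : ℝ) ^ m • y)) := by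
        rw [hrescale]
        exact herzENorm_comp_two_zpow_smul_le ν q r _ (-m)
    _ ≤ 2 ^ (-((-m : ℤ) * (ν + n * (q⁻¹).toReal))) *
          (K * (2 ^ (-(m * (μ + n * (p⁻¹).toReal))) * herzENorm μ p r₀ g)) := by
        gcongr
        exact (hunit _ ht_unit _ (hg.comp (measurable_const_smul _))).trans
          (by gcongr; exact herzENorm_comp_two_zpow_smul_le μ p r₀ g m)
    _ = K * (2 ^ (-((-m : ℤ) * (ν + n * (q⁻¹).toReal))) *
          2 ^ (-(m * (μ + n * (p⁻¹).toReal)))) * herzENorm μ p r₀ g := by ring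
    _ = K * 2 ^ (m * (ν + n * (q⁻¹).toReal - (μ + n * (p⁻¹).toReal))) * herzENorm μ p r₀ g := by
        rw [← two_rpow_add]
        push_cast
        ring_nf

theorem two_rpow_mul_le_mul_rpow {m : ℤ} {t e : ℝ} (ht : 0 < t) (htm : t ≤ 4 ^ (m + 1))
    (he : e ≤ 0) : (2 : ℝ) ^ (m * e) ≤ 2 ^ (-e) * t ^ (e / 2) := by
  have hfour : (4 : ℝ) = 2 ^ (2 : ℝ) := by norm_num
  calc (2 : ℝ) ^ (m * e) = 2 ^ (-e) * ((4 : ℝ) ^ (m + 1)) ^ (e / 2) := by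
        rw [← Real.rpow_intCast, hfour, ← Real.rpow_mul two_pos.le, ← Real.rpow_mul two_pos.le,
          ← Real.rpow_add two_pos]
        push_cast
        ring_nf
    _ ≤ 2 ^ (-e) * t ^ (e / 2) := by
        gcongr 2 ^ (-e) * ?_
        exact Real.rpow_le_rpow_of_nonpos ht htm (by linarith)

theorem exists_herzENorm_heatAverage_le [NeZero n] {μ ν : ℝ} {p q r r₀ : ℝ≥0∞}
    (hp : 1 ≤ p) (hq : 1 ≤ q) (hr : r ≠ 0) (hr₀ : r₀ ≠ 0) (hμν : ν ≤ μ)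
    (hν : 0 ≤ ν + n * (q⁻¹).toReal) (hνμ : ν + n * (q⁻¹).toReal ≤ μ + n * (p⁻¹).toReal)
    (hμ : μ + n * (p⁻¹).toReal ≤ n) (hν_zero : ν + n * (q⁻¹).toReal = 0 → r = ⊤)
    (hμ_or : μ + n * (p⁻¹).toReal < n ∨ r₀ ≤ 1)
    (hμν_or : (ν < μ ∧ ν + n * (q⁻¹).toReal < μ + n * (p⁻¹).toReal) ∨ r₀ ≤ r) :
    ∃ C : ℝ, 0 < C ∧ ∀ t : ℝ, 0 < t → ∀ g : Euc n → ℝ≥0∞, Measurable g →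
      herzENorm ν q r (heatAverage t g) ≤
        ENNReal.ofReal (C * t ^ ((ν + n * (q⁻¹).toReal - (μ + n * (p⁻¹).toReal)) / 2)) *
          herzENorm μ p r₀ g := by
  obtain ⟨K, hK, hunit⟩ := exists_herzENorm_heatAverage_le_of_mem_Icc hp hq hr hr₀ hμν hν hνμ hμ
    hν_zero hμ_or hμν_or
  set e := ν + n * (q⁻¹).toReal - (μ + n * (p⁻¹).toReal)
  have he : e ≤ 0 := sub_nonpos.2 hνμ
  refine ⟨(K.toReal + 1) * 2 ^ (-e), by positivity, fun t ht g hg ↦ ?_⟩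
  obtain ⟨m, hm⟩ := exists_mem_Ico_zpow ht (show (1 : ℝ) < 4 by norm_num)
  calc herzENorm ν q r (heatAverage t g)
      ≤ K * 2 ^ (m * e) * herzENorm μ p r₀ g :=
        herzENorm_heatAverage_le_of_unit_times hunit (Ico_subset_Icc_self hm) hg
    _ ≤ ENNReal.ofReal (K.toReal + 1) * ENNReal.ofReal (2 ^ (-e) * t ^ (e / 2)) *
          herzENorm μ p r₀ g := by
        rw [← ofReal_two_rpow]
        gcongr
        · exact (ENNReal.ofReal_toReal hK).ge.trans (ENNReal.ofReal_le_ofReal (by linarith))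
        · exact two_rpow_mul_le_mul_rpow ht hm.2.le he
    _ = ENNReal.ofReal ((K.toReal + 1) * 2 ^ (-e) * t ^ (e / 2)) * herzENorm μ p r₀ g := by
        rw [← ENNReal.ofReal_mul (by positivity), mul_assoc]

end Scaling

theorem heatSemigroup_herz_estimate_general
    (n : ℕ) (hn : 1 ≤ n) (μ ν : ℝ) (p q r r₀ : ℝ≥0∞)
    (hp : 1 ≤ p) (hq : 1 ≤ q) (hr : 0 < r) (hr₀ : 0 < r₀)
    (hμν : ν ≤ μ)
    (h0 : 0 ≤ ν / (n : ℝ) + (q⁻¹).toReal)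
    (h1 : ν / (n : ℝ) + (q⁻¹).toReal ≤ μ / (n : ℝ) + (p⁻¹).toReal)
    (h2 : μ / (n : ℝ) + (p⁻¹).toReal ≤ 1)
    (h4 : ν / (n : ℝ) + (q⁻¹).toReal = 0 → r = ⊤)
    (hμ_or : μ / (n : ℝ) + (p⁻¹).toReal < 1 ∨ r₀ ≤ 1)
    (hμν_or : (ν < μ ∧ ν / (n : ℝ) + (q⁻¹).toReal < μ / (n : ℝ) + (p⁻¹).toReal) ∨ r₀ ≤ r) :
    ∃ C : ℝ, 0 < C ∧ ∀ t : ℝ, 0 < t → ∀ f : Euc n → ℝ, Measurable f →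
      herzNorm n ν q r (heatSemigroup n t f) ≤
        ENNReal.ofReal (C * t ^ (-((n : ℝ) / 2) *
            ((μ / (n : ℝ) + (p⁻¹).toReal) - (ν / (n : ℝ) + (q⁻¹).toReal)))) *
          herzNorm n μ p r₀ f := by
  have : NeZero n := ⟨by lia⟩
  have hn_pos : (0 : ℝ) < n := by exact_mod_cast hn
  have hscale (s a : ℝ) : s / n + a = (s + n * a) / n := by field_simp
  simp only [hscale, div_le_div_iff_of_pos_right hn_pos, div_lt_div_iff_of_pos_right hn_pos,
    div_le_one hn_pos, div_lt_one hn_pos, le_div_iff₀ hn_pos, zero_mul] at h0 h1 h2 hμ_or hμν_or ⊢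
  have hν_zero (h : ν + n * (q⁻¹).toReal = 0) : r = ⊤ := h4 (by rw [hscale, h, zero_div])
  obtain ⟨C, hC, hheat⟩ :=
    exists_herzENorm_heatAverage_le hp hq hr.ne' hr₀.ne' hμν h0 h1 h2 hν_zero hμ_or hμν_or
  refine ⟨C, hC, fun t ht f hf ↦ ?_⟩
  rw [herzNorm_eq_herzENorm ν q hr.ne', herzNorm_eq_herzENorm μ p hr₀.ne', ← sub_div,
    show -((n : ℝ) / 2) * ((μ + n * (p⁻¹).toReal - (ν + n * (q⁻¹).toReal)) / n) =
      (ν + n * (q⁻¹).toReal - (μ + n * (p⁻¹).toReal)) / 2 by field_simp; ring]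
  refine le_trans ?_ (hheat t ht _ hf.enorm)
  exact eLpNorm_mono_enorm fun j ↦ herzSeq_mono ν q fun x _ ↦ enorm_heatSemigroup_le ht f x

/-- Smoothing estimate for the heat semigroup between Herz spaces:
`‖e^{tΔ}f‖_{K̇^ν_{q,r}} ≲ t^{-(n/2)[(μ/n + 1/p) - (ν/n + 1/q)]} ‖f‖_{K̇^μ_{p,r₀}}`. -/
theorem heatSemigroup_herz_estimate
    (n : ℕ) (hn : 1 ≤ n) (μ ν : ℝ) (p q r r₀ : ℝ≥0∞)
    (hp : 1 ≤ p) (hq : 1 ≤ q) (hr : 0 < r) (hr₀ : 0 < r₀)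
    (hμν : ν ≤ μ)
    (h0 : 0 ≤ ν / (n : ℝ) + (q⁻¹).toReal)
    (h1 : ν / (n : ℝ) + (q⁻¹).toReal ≤ μ / (n : ℝ) + (p⁻¹).toReal)
    (h2 : μ / (n : ℝ) + (p⁻¹).toReal ≤ 1)
    (h3 : μ / (n : ℝ) + (p⁻¹).toReal = 0 → r₀ = ⊤)
    (h4 : ν / (n : ℝ) + (q⁻¹).toReal = 0 → r = ⊤)
    (hcase :
      (ν < μ ∧ p < ⊤ ∧ q < ⊤ ∧ r₀ = ⊤ ∧
        ν / (n : ℝ) + (q⁻¹).toReal < μ / (n : ℝ) + (p⁻¹).toReal ∧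
        μ / (n : ℝ) + (p⁻¹).toReal < 1) ∨
      (p < ⊤ ∧ q < ⊤ ∧ r₀ ≤ r ∧ μ / (n : ℝ) + (p⁻¹).toReal < 1) ∨
      (r₀ ≤ min 1 r)) :
    ∃ C : ℝ, 0 < C ∧ ∀ t : ℝ, 0 < t → ∀ f : Euc n → ℝ, Measurable f →
      herzNorm n ν q r (heatSemigroup n t f) ≤
        ENNReal.ofReal (C * t ^ (-((n : ℝ) / 2) *
            ((μ / (n : ℝ) + (p⁻¹).toReal) - (ν / (n : ℝ) + (q⁻¹).toReal)))) *
          herzNorm n μ p r₀ f := by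
  rw [le_min_iff] at hcase
  exact heatSemigroup_herz_estimate_general n hn μ ν p q r r₀ hp hq hr hr₀ hμν h0 h1 h2 h4
    (by tauto) (by tauto)
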